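/- Every prime power q with ω(q−1) ≥ 16 lies in G. -/

import Mathlib

/-- `memG q` says that the prime power `q` lies in the set `𝒢`: for every finite field `F`
with `q` elements and all non-zero `a, c ∈ F`, there exists a primitive root `g` of `F`
(i.e. an element of multiplicative order `q - 1`, a generator of `Fˣ`) such that
`a - c * g` is also a primitive root of `F`. -/
def memG (q : ℕ) : Prop :=
  IsPrimePow q ∧ ∀ (F : Type) [Field F] [Fintype F], Fintype.card F = q →
    ∀ a c : F, a ≠ 0 → c ≠ 0 →
      ∃ g : F, orderOf g = q - 1 ∧ orderOf (a - c * g) = q - 1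

open Finset

/-- A set of at least `16` primes has product at least `(3 / 2) * 16 ^ k`, where `k` is the number
of its elements. -/
lemma three_mul_sixteen_pow_card_le_two_mul_prod (s : Finset ℕ) (hs : ∀ p ∈ s, p.Prime)
    (h : 16 ≤ s.card) : 3 * 16 ^ s.card ≤ 2 * ∏ p ∈ s, p := by
  set t : Finset ℕ := {2, 3, 5, 7, 11, 13, 17, 19, 23, 29, 31, 37, 41, 43, 47, 53} with ht
  have ht16 : t.card = 16 := by decide
  have htle : ∀ p ∈ t, p ≤ 53 := by decide
  have hst : ∀ p ∈ s \ t, 53 ≤ p := by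
    intro p hp
    rw [mem_sdiff] at hp
    by_contra! hlt
    have hprime := hs p hp.1
    have hnot := hp.2
    interval_cases p <;> revert hprime hnot <;> simp [ht] <;> norm_num
  have hcard : (s \ t).card = (t \ s).card + (s.card - 16) := by
    have h₁ := card_sdiff_add_card_inter s t
    have h₂ := card_sdiff_add_card_inter t s
    rw [inter_comm t s] at h₂
    omega
  have hprod : (∏ p ∈ t \ s, p) * 16 ^ (s.card - 16) ≤ ∏ p ∈ s \ t, p := by
    calc (∏ p ∈ t \ s, p) * 16 ^ (s.card - 16)
        ≤ 53 ^ (t \ s).card * 53 ^ (s.card - 16) := by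
          gcongr
          · exact prod_le_pow_card _ _ _ fun p hp => htle p (mem_sdiff.1 hp).1
          · norm_num
      _ = 53 ^ (s \ t).card := by rw [hcard, pow_add]
      _ ≤ ∏ p ∈ s \ t, p := pow_card_le_prod _ _ _ hst
  have hsplit : (∏ p ∈ s ∩ t, p) * ∏ p ∈ t \ s, p = ∏ p ∈ t, p := by
    rw [inter_comm]; exact prod_inter_mul_prod_sdiff t s _
  have htprod : 3 * 16 ^ 16 ≤ 2 * ∏ p ∈ t, p := by decide
  calc 3 * 16 ^ s.card = 3 * 16 ^ 16 * 16 ^ (s.card - 16) := by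
        rw [mul_assoc, ← pow_add, Nat.add_sub_cancel' h]
    _ ≤ 2 * (∏ p ∈ t, p) * 16 ^ (s.card - 16) := by gcongr
    _ = 2 * ((∏ p ∈ s ∩ t, p) * ((∏ p ∈ t \ s, p) * 16 ^ (s.card - 16))) := by
        rw [← hsplit]; ring
    _ ≤ 2 * ((∏ p ∈ s ∩ t, p) * ∏ p ∈ s \ t, p) := by gcongr
    _ = 2 * ∏ p ∈ s, p := by rw [prod_inter_mul_prod_sdiff]

section CharacterSums

variable {F : Type} [Field F]

/-- The function `f` is, away from `0`, a linear combination of multiplicative characters whose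
coefficients have absolute values summing to at most `A`. -/
def HasCharExpansion (f : F → ℂ) (A : ℝ) : Prop :=
  ∃ (ι : Type) (_ : Fintype ι) (c : ι → ℂ) (χ : ι → MulChar F ℂ),
    (∀ x ≠ 0, f x = ∑ i, c i * χ i x) ∧ ∑ i, ‖c i‖ ≤ A

lemma HasCharExpansion.one : HasCharExpansion (fun _ : F => 1) 1 := by
  refine ⟨Unit, inferInstance, fun _ => 1, fun _ => 1, fun x hx => ?_, by simp⟩
  simp [MulChar.one_apply (IsUnit.mk0 x hx)]

lemma HasCharExpansion.mul {f g : F → ℂ} {A B : ℝ} (hf : HasCharExpansion f A)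
    (hg : HasCharExpansion g B) : HasCharExpansion (fun x => f x * g x) (A * B) := by
  obtain ⟨ι, _, c, χ, hfc, hcA⟩ := hf
  obtain ⟨κ, _, d, ψ, hgd, hdB⟩ := hg
  refine ⟨ι × κ, inferInstance, fun i => c i.1 * d i.2, fun i => χ i.1 * ψ i.2,
    fun x hx => ?_, ?_⟩
  · simp only [hfc x hx, hgd x hx]
    rw [sum_mul_sum, Fintype.sum_prod_type]
    refine sum_congr rfl fun i _ => sum_congr rfl fun j _ => ?_
    rw [MulChar.mul_apply]
    ring
  · simp only [norm_mul, Fintype.sum_prod_type, ← sum_mul_sum]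
    exact mul_le_mul hcA hdB (by positivity) ((by positivity : (0 : ℝ) ≤ _).trans hcA)

lemma HasCharExpansion.prod {κ : Type} (s : Finset κ) {f : κ → F → ℂ} {A : ℝ}
    (h : ∀ k ∈ s, HasCharExpansion (f k) A) :
    HasCharExpansion (fun x => ∏ k ∈ s, f k x) (A ^ s.card) := by
  classical
  induction s using Finset.induction_on with
  | empty => simpa using HasCharExpansion.one
  | insert k s hk ih =>
    simp only [prod_insert hk, card_insert_of_notMem hk, pow_succ']
    exact (h k (mem_insert_self k s)).mul (ih fun j hj => h j (mem_insert_of_mem hj))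

variable [Fintype F]

lemma MulChar.norm_apply_of_ne_zero (χ : MulChar F ℂ) {x : F} (hx : x ≠ 0) : ‖χ x‖ = 1 := by
  classical
  have h : χ x ^ Fintype.card Fˣ = 1 := by
    rw [← map_pow, Fintype.card_units, FiniteField.pow_card_sub_one_eq_one x hx, map_one]
  exact Complex.norm_eq_one_of_pow_eq_one h Fintype.card_ne_zero

/-- A Jacobi sum in which not both characters are trivial is bounded by `√q`. -/
lemma norm_jacobiSum_le (χ φ : MulChar F ℂ) (h : ¬(χ = 1 ∧ φ = 1)) :
    ‖jacobiSum χ φ‖ ≤ √(Fintype.card F) := by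
  have hone : 1 ≤ √(Fintype.card F : ℝ) :=
    Real.one_le_sqrt.2 (by exact_mod_cast Fintype.card_pos)
  by_cases hχ : χ = 1
  · have hφ : φ ≠ 1 := fun hφ => h ⟨hχ, hφ⟩
    simpa [hχ, jacobiSum_one_nontrivial hφ] using hone
  by_cases hφ : φ = 1
  · rw [jacobiSum_comm]
    simpa [hφ, jacobiSum_one_nontrivial hχ] using hone
  by_cases hχφ : χ * φ = 1
  · rw [← inv_eq_of_mul_eq_one_right hχφ, jacobiSum_nontrivial_inv hχ, norm_neg,
      χ.norm_apply_of_ne_zero (neg_ne_zero.2 one_ne_zero)]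
    exact hone
  have hchar : ringChar ℂ ≠ ringChar F := by
    rw [ringChar.eq_zero]
    exact (CharP.ringChar_ne_zero_of_finite F).symm
  have hmul := jacobiSum_mul_jacobiSum_inv hchar hχ hφ hχφ
  have hconj : jacobiSum χ⁻¹ φ⁻¹ = starRingEnd ℂ (jacobiSum χ φ) := by
    rw [jacobiSum, jacobiSum, map_sum]
    refine sum_congr rfl fun x _ => ?_
    rw [map_mul, ← MulChar.star_apply', ← MulChar.star_apply']
    rfl
  rw [hconj, Complex.mul_conj, Complex.normSq_eq_norm_sq] at hmul
  have hsq : ‖jacobiSum χ φ‖ ^ 2 = Fintype.card F := by exact_mod_cast hmul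
  exact Real.le_sqrt_of_sq_le hsq.le

/-- A character of prime order `p` is trivial exactly on the `p`-th powers. -/
lemma MulChar.apply_eq_one_iff_of_orderOf_prime {p : ℕ} (hp : p.Prime)
    (hdvd : p ∣ Fintype.card F - 1) {χ : MulChar F ℂ} (hχ : orderOf χ = p) {x : F} (hx : x ≠ 0) :
    χ x = 1 ↔ x ^ ((Fintype.card F - 1) / p) = 1 := by
  classical
  obtain ⟨g, hg⟩ := IsCyclic.exists_generator (α := Fˣ)
  have hord : orderOf g = Fintype.card F - 1 := by
    rw [orderOf_eq_card_of_forall_mem_zpowers hg, Nat.card_eq_fintype_card, Fintype.card_units]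
  obtain ⟨k, hk⟩ := (Submonoid.mem_powers_iff _ _).1
    ((mem_powers_iff_mem_zpowers (x := g) (y := Units.mk0 x hx)).2 (hg _))
  have hxk : x = (g : F) ^ k := by
    rw [← Units.val_pow_eq_pow_val, hk, Units.val_mk0]
  have hgp : χ g ^ p = 1 := by
    rw [← MulChar.pow_apply_coe, ← hχ, pow_orderOf_eq_one, MulChar.one_apply_coe]
  have hg1 : χ g ≠ 1 := by
    intro h1
    have : χ = 1 := (MulChar.eq_iff hg χ 1).2 (by rw [h1, MulChar.one_apply_coe])
    rw [this, orderOf_one] at hχ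
    exact hp.one_lt.ne hχ
  have hordχ : orderOf (χ g) = p := by
    have := Fact.mk hp
    exact orderOf_eq_prime hgp hg1
  obtain ⟨m, hm⟩ := hdvd
  have hm0 : 0 < m := by
    refine Nat.pos_of_ne_zero fun h0 => ?_
    have : 1 < Fintype.card F := Fintype.one_lt_card
    rw [h0] at hm
    omega
  have hordF : orderOf (g : F) = p * m := by rw [orderOf_units, hord, hm]
  rw [hm, Nat.mul_div_cancel_left m hp.pos, hxk, map_pow, ← pow_mul, ← orderOf_dvd_iff_pow_eq_one,
    ← orderOf_dvd_iff_pow_eq_one, hordχ, hordF, Nat.mul_dvd_mul_iff_right hm0]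

lemma HasCharExpansion.ite_pow_div_prime {p : ℕ} (hp : p.Prime) (hdvd : p ∣ Fintype.card F - 1)
    [DecidableEq F] :
    HasCharExpansion (fun x : F => if x ^ ((Fintype.card F - 1) / p) = 1 then 0 else
      (p : ℂ) / (p - 1)) 2 := by
  obtain ⟨χ, hχ⟩ := MulChar.exists_mulChar_orderOf F hdvd
    (Complex.isPrimitiveRoot_exp p hp.ne_zero)
  have hp1 : (p : ℂ) - 1 ≠ 0 := sub_ne_zero.2 (by exact_mod_cast hp.one_lt.ne')
  have hp1' : (0 : ℝ) < p - 1 := sub_pos.2 (by exact_mod_cast hp.one_lt)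
  have hzero : (0 : ℕ) ∈ range p := mem_range.2 hp.pos
  refine ⟨Fin p, inferInstance, fun i => if (i : ℕ) = 0 then 1 else -1 / (p - 1),
    fun i => χ ^ (i : ℕ), fun x hx => ?_, ?_⟩
  · have hpow (n : ℕ) : (χ ^ n) x = χ x ^ n := by
      simpa using MulChar.pow_apply_coe χ n (Units.mk0 x hx)
    simp only [hpow]
    rw [Fin.sum_univ_eq_sum_range
      (fun n => (if n = 0 then (1 : ℂ) else -1 / (p - 1)) * χ x ^ n)]
    have hsum : ∑ n ∈ range p, (if n = 0 then (1 : ℂ) else -1 / (p - 1)) * χ x ^ n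
        = (p : ℂ) / (p - 1) - (∑ n ∈ range p, χ x ^ n) / (p - 1) := by
      rw [← add_sum_erase _ _ hzero, ← add_sum_erase _ (fun n => χ x ^ n) hzero,
        sum_congr rfl (g := fun n => -1 / ((p : ℂ) - 1) * χ x ^ n)
          (fun n hn => by rw [if_neg (ne_of_mem_erase hn)]), ← mul_sum]
      simp only [if_true, pow_zero]
      field_simp
      ring
    rw [hsum]
    simp only [← MulChar.apply_eq_one_iff_of_orderOf_prime hp hdvd hχ hx]
    split_ifs with h1
    · simp [h1]
    · rw [geom_sum_eq h1, ← hpow, ← hχ, pow_orderOf_eq_one, MulChar.one_apply (IsUnit.mk0 x hx)]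
      simp
  · rw [Fin.sum_univ_eq_sum_range (fun n => ‖if n = 0 then (1 : ℂ) else -1 / (p - 1)‖),
      ← add_sum_erase _ _ hzero, sum_congr rfl (g := fun n => 1 / ((p : ℝ) - 1))
        (fun n hn => ?_), sum_const, card_erase_of_mem hzero, card_range, nsmul_eq_mul,
        Nat.cast_sub hp.one_le]
    · simp only [if_true, norm_one, Nat.cast_one]
      rw [mul_one_div_cancel hp1'.ne']
      norm_num
    · rw [if_neg (ne_of_mem_erase hn), norm_div, norm_neg, norm_one]
      congr 1
      rw [← abs_of_pos hp1', ← Real.norm_eq_abs, ← Complex.norm_real]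
      push_cast
      rfl

lemma FiniteField.orderOf_eq_card_sub_one_iff {x : F} (hx : x ≠ 0) :
    orderOf x = Fintype.card F - 1 ↔
      ∀ p ∈ (Fintype.card F - 1).primeFactors, x ^ ((Fintype.card F - 1) / p) ≠ 1 := by
  have hpos : 0 < Fintype.card F - 1 := Nat.sub_pos_of_lt Fintype.one_lt_card
  constructor
  · intro h p hp hx1
    have hp' := Nat.prime_of_mem_primeFactors hp
    have hle := Nat.le_of_dvd (Nat.div_pos (Nat.le_of_mem_primeFactors hp) hp'.pos)
      (orderOf_dvd_of_pow_eq_one hx1)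
    rw [h] at hle
    exact absurd hle (Nat.div_lt_self hpos hp'.one_lt).not_ge
  · exact fun h => orderOf_eq_of_pow_and_pow_div_prime hpos
      (FiniteField.pow_card_sub_one_eq_one x hx)
      fun p hp hpd => h p (Nat.mem_primeFactors.2 ⟨hp, hpd, hpos.ne'⟩)

/-- The indicator function of the primitive roots, normalised to have mean value `1` on `Fˣ`, has
a character expansion of size `2 ^ ω(q - 1)`. -/
lemma HasCharExpansion.primitiveRoot :
    HasCharExpansion (fun x : F => if orderOf x = Fintype.card F - 1 then
      ((Fintype.card F - 1 : ℕ) : ℂ) / (Fintype.card F - 1).totient else 0)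
      (2 ^ (Fintype.card F - 1).primeFactors.card) := by
  classical
  have hpos : 0 < Fintype.card F - 1 := Nat.sub_pos_of_lt Fintype.one_lt_card
  obtain ⟨ι, _, c, χ, hc, hA⟩ := HasCharExpansion.prod (F := F)
    (Fintype.card F - 1).primeFactors fun p hp =>
      HasCharExpansion.ite_pow_div_prime (Nat.prime_of_mem_primeFactors hp)
        (Nat.dvd_of_mem_primeFactors hp)
  refine ⟨ι, _, c, χ, fun x hx => ?_, hA⟩
  rw [← hc x hx]
  beta_reduce
  split_ifs with h
  · rw [FiniteField.orderOf_eq_card_sub_one_iff hx] at h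
    rw [prod_congr rfl fun p hp => if_neg (h p hp), prod_div_distrib]
    have hne : ∏ p ∈ (Fintype.card F - 1).primeFactors, ((p : ℂ) - 1) ≠ 0 :=
      prod_ne_zero_iff.2 fun p hp => sub_ne_zero.2 (by
        exact_mod_cast (Nat.prime_of_mem_primeFactors hp).one_lt.ne')
    rw [div_eq_div_iff (by exact_mod_cast (Nat.totient_pos.2 hpos).ne') hne, mul_comm (∏ _ ∈ _, _)]
    have := congrArg (Nat.cast (R := ℂ)) (Nat.totient_mul_prod_primeFactors (Fintype.card F - 1))
    rw [Nat.cast_mul, Nat.cast_mul, Nat.cast_prod, Nat.cast_prod] at this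
    rw [this]
    congr 1
    exact prod_congr rfl fun p hp => by
      rw [Nat.cast_sub (Nat.prime_of_mem_primeFactors hp).one_le, Nat.cast_one]
  · rw [FiniteField.orderOf_eq_card_sub_one_iff hx] at h
    push Not at h
    obtain ⟨p, hp, hp1⟩ := h
    symm
    exact prod_eq_zero hp (if_pos hp1)

lemma FiniteField.card_filter_orderOf_eq_card_sub_one [DecidableEq F] :
    #{x : F | orderOf x = Fintype.card F - 1} = (Fintype.card F - 1).totient := by
  have hpos : 0 < Fintype.card F - 1 := Nat.sub_pos_of_lt Fintype.one_lt_card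
  rw [← IsCyclic.card_orderOf_eq_totient (α := Fˣ) (by rw [Fintype.card_units])]
  symm
  refine card_bij (fun u _ => (u : F)) (fun u hu => by simpa [orderOf_units] using hu)
    (fun u _ v _ h => Units.ext h) fun x hx => ?_
  have hx' : orderOf x = Fintype.card F - 1 := by simpa using hx
  have hx0 : x ≠ 0 := by
    rintro rfl
    rw [orderOf_zero] at hx'
    omega
  exact ⟨Units.mk0 x hx0, by simpa [← orderOf_units] using hx', rfl⟩

/-- If `q - 2` exceeds `4 ^ ω(q - 1) * √q`, then every pair of non-zero elements `a, c` admits a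
primitive root `g` such that `a - c * g` is again a primitive root. -/
lemma exists_primitiveRoot_sub_mul_primitiveRoot
    (hq : ((2 : ℝ) ^ (Fintype.card F - 1).primeFactors.card) ^ 2 * √(Fintype.card F)
      < Fintype.card F - 2) {a c : F} (ha : a ≠ 0) (hc : c ≠ 0) :
    ∃ g : F, orderOf g = Fintype.card F - 1 ∧ orderOf (a - c * g) = Fintype.card F - 1 := by
  classical
  have hpos : 0 < Fintype.card F - 1 := Nat.sub_pos_of_lt Fintype.one_lt_card
  obtain ⟨ι, _, w, χ, hw, hA⟩ := HasCharExpansion.primitiveRoot (F := F)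
  set A : ℝ := 2 ^ (Fintype.card F - 1).primeFactors.card
  set f : F → ℂ := fun x => ∑ i, w i * χ i x with hf
  have hf0 : f 0 = 0 := sum_eq_zero fun i _ => by rw [MulChar.map_zero, mul_zero]
  -- The coefficient of the trivial character is `1`.
  have htriv : ∑ i, (if χ i = 1 then w i else 0) = 1 := by
    have h₁ : ∑ x, f x = ∑ i, (if χ i = 1 then w i else 0) * (Fintype.card F - 1 : ℕ) := by
      rw [hf, sum_comm]
      refine sum_congr rfl fun i _ => ?_
      rw [← mul_sum]
      split_ifs with h
      · rw [h, MulChar.sum_one_eq_card_units, Fintype.card_units]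
      · rw [MulChar.sum_eq_zero_of_ne_one h, mul_zero, zero_mul]
    have h₂ : ∑ x, f x = (Fintype.card F - 1 : ℕ) := by
      have hfx (x : F) : f x = if orderOf x = Fintype.card F - 1 then
          ((Fintype.card F - 1 : ℕ) : ℂ) / (Fintype.card F - 1).totient else 0 := by
        by_cases hx : x = 0
        · rw [hx, hf0, orderOf_zero, if_neg hpos.ne]
        · exact (hw x hx).symm
      rw [sum_congr rfl fun x _ => hfx x, ← sum_filter, sum_const,
        FiniteField.card_filter_orderOf_eq_card_sub_one, nsmul_eq_mul,
        mul_div_cancel₀ _ (by exact_mod_cast (Nat.totient_pos.2 hpos).ne')]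
    rw [← sum_mul, h₂] at h₁
    exact (mul_eq_right₀ (by exact_mod_cast hpos.ne')).1 h₁.symm
  suffices hS : ∑ y, f (a / c * y) * f (a * (1 - y)) ≠ 0 by
    obtain ⟨y, -, hy⟩ := exists_ne_zero_of_sum_ne_zero hS
    have hprim {x : F} (hx : f x ≠ 0) : orderOf x = Fintype.card F - 1 := by
      by_contra hne
      exact hx (((hw x fun h0 => hx (h0 ▸ hf0)).symm).trans (if_neg hne))
    refine ⟨a / c * y, hprim (left_ne_zero_of_mul hy), ?_⟩
    rw [show a - c * (a / c * y) = a * (1 - y) by field_simp]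
    exact hprim (right_ne_zero_of_mul hy)
  have hexpand : ∑ y, f (a / c * y) * f (a * (1 - y)) =
      ∑ i, ∑ j, w i * w j * (χ i (a / c) * χ j a * jacobiSum (χ i) (χ j)) := by
    simp only [hf, jacobiSum, sum_mul_sum]
    simp only [mul_sum]
    rw [sum_comm]
    refine sum_congr rfl fun i _ => ?_
    rw [sum_comm]
    refine sum_congr rfl fun j _ => sum_congr rfl fun y _ => ?_
    rw [map_mul, map_mul]
    ring
  have hmain : ((Fintype.card F : ℂ) - 2) = ∑ i, ∑ j, w i * w j *
      (if χ i = 1 ∧ χ j = 1 then (Fintype.card F : ℂ) - 2 else 0) := by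
    calc ((Fintype.card F : ℂ) - 2)
        = (∑ i, (if χ i = 1 then w i else 0)) * (∑ j, (if χ j = 1 then w j else 0)) *
          ((Fintype.card F : ℂ) - 2) := by rw [htriv, one_mul, one_mul]
      _ = _ := by
        rw [sum_mul_sum, sum_mul]
        refine sum_congr rfl fun i _ => ?_
        rw [sum_mul]
        refine sum_congr rfl fun j _ => ?_
        by_cases hi : χ i = 1 <;> by_cases hj : χ j = 1 <;> simp [hi, hj]
  intro hzero
  have hbound : ‖∑ y, f (a / c * y) * f (a * (1 - y)) - ((Fintype.card F : ℂ) - 2)‖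
      ≤ A ^ 2 * √(Fintype.card F) := by
    rw [hexpand, hmain, ← sum_sub_distrib]
    calc _ ≤ ∑ i, ∑ j, ‖w i‖ * ‖w j‖ * √(Fintype.card F) := by
          refine (norm_sum_le _ _).trans (sum_le_sum fun i _ => ?_)
          rw [← sum_sub_distrib]
          refine (norm_sum_le _ _).trans (sum_le_sum fun j _ => ?_)
          rw [← mul_sub, norm_mul, norm_mul]
          refine mul_le_mul_of_nonneg_left ?_ (by positivity)
          split_ifs with h
          · rw [h.1, h.2, jacobiSum_one_one, MulChar.one_apply (IsUnit.mk0 _ (div_ne_zero ha hc)),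
              MulChar.one_apply (IsUnit.mk0 a ha)]
            simp
          · rw [sub_zero, norm_mul, norm_mul, (χ i).norm_apply_of_ne_zero (div_ne_zero ha hc),
              (χ j).norm_apply_of_ne_zero ha, one_mul, one_mul]
            exact norm_jacobiSum_le _ _ h
      _ = (∑ i, ‖w i‖) ^ 2 * √(Fintype.card F) := by
          rw [sq, sum_mul_sum, sum_mul]
          simp only [sum_mul]
      _ ≤ A ^ 2 * √(Fintype.card F) := by gcongr
  rw [hzero, zero_sub, norm_neg] at hbound
  have hre := (Complex.re_le_norm ((Fintype.card F : ℂ) - 2)).trans hbound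
  rw [Complex.sub_re, Complex.natCast_re, Complex.re_ofNat] at hre
  exact hq.not_ge hre

end CharacterSums

/-- Every prime power `q` such that `q - 1` has at least `16` distinct prime factors
lies in `𝒢`. -/
theorem memG_of_omega_ge_sixteen (q : ℕ) (hq : IsPrimePow q)
    (h : 16 ≤ (q - 1).primeFactors.card) : memG q := by
  refine ⟨hq, fun F _ _ hF a c ha hc => ?_⟩
  subst hF
  refine exists_primitiveRoot_sub_mul_primitiveRoot ?_ ha hc
  set q := Fintype.card F
  set k := (q - 1).primeFactors.card
  have hpos : 0 < q - 1 := Nat.sub_pos_of_lt hq.one_lt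
  have hprod := three_mul_sixteen_pow_card_le_two_mul_prod (q - 1).primeFactors
    (fun p hp => Nat.prime_of_mem_primeFactors hp) h
  have hle : ∏ p ∈ (q - 1).primeFactors, p ≤ q - 1 :=
    Nat.le_of_dvd hpos (Nat.prod_primeFactors_dvd _)
  have hnat : 3 * 16 ^ k ≤ 2 * q := by
    change 3 * 16 ^ k ≤ _ at hprod
    omega
  have hreal : 3 * (((2 : ℝ) ^ k) ^ 2) ^ 2 ≤ 2 * (√q) ^ 2 := by
    rw [Real.sq_sqrt (by positivity), ← pow_mul, ← pow_mul, mul_comm k, pow_mul]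
    norm_num
    exact_mod_cast hnat
  have hB : (16 : ℝ) ≤ ((2 : ℝ) ^ k) ^ 2 := by
    calc (16 : ℝ) ≤ ((2 : ℝ) ^ 16) ^ 2 := by norm_num
      _ ≤ ((2 : ℝ) ^ k) ^ 2 := by gcongr; norm_num
  have hsq : (√(q : ℝ)) ^ 2 = q := Real.sq_sqrt (by positivity)
  have hs : 6 / 5 * ((2 : ℝ) ^ k) ^ 2 ≤ √q := by
    refine le_of_sq_le_sq ?_ (by positivity)
    nlinarith
  nlinarith
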